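/- arXiv:2010.09229 — 4 statements merged into one kernel-verified Lean document; each statement's English description precedes it below -/
import Mathlib

section
/- The collection of locally-zero groupoids on X is closed under the groupoid product: if a and b are locally-zero groupoids on X, then a ⋄ b is locally-zero. -/
/-- The groupoid product `⋄` on `Bin(X)`: `(f ⋄ g) x y = g (f x y) (f y x)`. -/
def binProd {X : Type*} (f g : X → X → X) : X → X → X :=
  fun x y => g (f x y) (f y x)

/-- A groupoid is locally-zero if it is idempotent and every pair `{x, y}`
forms a left-zero- or a right-zero-semigroup. -/
def LocallyZero {X : Type*} (f : X → X → X) : Prop :=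
  (∀ x, f x x = x) ∧
    ∀ x y, x ≠ y → (f x y = x ∧ f y x = y) ∨ (f x y = y ∧ f y x = x)

theorem stmt_2 {X : Type*} (a b : X → X → X)
    (ha : LocallyZero a) (hb : LocallyZero b) :
    LocallyZero (binProd a b) := by
  obtain ⟨ha1, ha2⟩ := ha
  obtain ⟨hb1, hb2⟩ := hb
  refine ⟨fun x => by simp only [binProd, ha1, hb1], fun x y hxy => ?_⟩
  simp only [binProd]
  rcases ha2 x y hxy with ⟨h1, h2⟩ | ⟨h1, h2⟩ <;>
  rcases hb2 x y hxy with ⟨h3, h4⟩ | ⟨h3, h4⟩ <;>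
  simp [h1, h2, h3, h4]
end

section
/- Every strong groupoid has a UA-factorization: if • is a strong groupoid on X, then • = U(•) ⋄ A(•), i.e., writing ∗ = U(•) and ∘ = A(•), one has (x ∗ y) ∘ (y ∗ x) = x • y for all x, y ∈ X. -/
/-- The signature-factor `U(•)`: `x ∗ y = x` if `x = y`, else `x • y`. -/
def signatureFactor {X : Type*} [DecidableEq X] (f : X → X → X) : X → X → X :=
  fun x y => if x = y then x else f x y

/-- The similar-factor `A(•)`: `x ∘ y = x • x` if `x = y`, else `x`. -/
def similarFactor {X : Type*} [DecidableEq X] (f : X → X → X) : X → X → X :=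
  fun x y => if x = y then f x x else x

theorem stmt_5 {X : Type*} [DecidableEq X] (f : X → X → X)
    (hstrong : ∀ x y : X, f x y = f y x → x = y) :
    binProd (signatureFactor f) (similarFactor f) = f ∧
      ∀ x y : X, similarFactor f (signatureFactor f x y) (signatureFactor f y x) = f x y := by
  have key : ∀ x y : X,
      similarFactor f (signatureFactor f x y) (signatureFactor f y x) = f x y := by
    intro x y
    by_cases h : x = y
    · subst h
      simp [similarFactor, signatureFactor]
    · have h1 : ¬ y = x := fun e => h e.symm
      have h2 : ¬ f x y = f y x := fun e => h (hstrong x y e)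
      simp [similarFactor, signatureFactor, h, h1, h2]
  exact ⟨funext fun x => funext fun y => key x y, key⟩
end

section
/- Every strong groupoid is u-normal: if • is a strong groupoid on X, then both • = U(•) ⋄ A(•) and • = A(•) ⋄ U(•) hold. -/
theorem stmt_7 {X : Type*} [DecidableEq X] (f : X → X → X)
    (hstrong : ∀ x y : X, f x y = f y x → x = y) :
    binProd (signatureFactor f) (similarFactor f) = f ∧
      binProd (similarFactor f) (signatureFactor f) = f := by
  constructor
  · funext x y
    by_cases h : x = y
    · subst h
      simp [binProd, signatureFactor, similarFactor]
    · have h1 : ¬ y = x := fun e => h e.symm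
      have h2 : ¬ f x y = f y x := fun e => h (hstrong x y e)
      simp [binProd, signatureFactor, similarFactor, h, h1, h2]
  · funext x y
    by_cases h : x = y
    · subst h
      simp [binProd, signatureFactor, similarFactor]
    · have h1 : ¬ y = x := fun e => h e.symm
      simp [binProd, signatureFactor, similarFactor, h, h1]
end

section
/- A groupoid on Fin n with the orientation property has a JO-factorization: if • is a groupoid on Fin n such that x • y ∈ {x, y} for all x, y, then • = J(•) ⋄ O, i.e., O (J(•) x y) (J(•) y x) = x • y for all x, y ∈ Fin n. -/
/-- The orient-factor on `Fin n`: `O x y = rev x` if `y = rev x`, else `x`. -/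
def orientFactor (n : ℕ) : Fin n → Fin n → Fin n :=
  fun x y => if y = Fin.rev x then Fin.rev x else x

/-- The skew-factor `J(•)` on `Fin n`: `J(•) x y = y • x` if `y = rev x`, else `x • y`. -/
def skewFactor {n : ℕ} (f : Fin n → Fin n → Fin n) : Fin n → Fin n → Fin n :=
  fun x y => if y = Fin.rev x then f y x else f x y

theorem stmt_15 {n : ℕ} (f : Fin n → Fin n → Fin n)
    (hOP : ∀ x y : Fin n, f x y = x ∨ f x y = y) :
    binProd (skewFactor f) (orientFactor n) = f ∧
      ∀ x y : Fin n, orientFactor n (skewFactor f x y) (skewFactor f y x) = f x y := by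
  have key : ∀ x y : Fin n,
      orientFactor n (skewFactor f x y) (skewFactor f y x) = f x y := by
    intro x y
    have h1 := hOP x y
    have h2 := hOP y x
    have hr := Fin.rev_rev x
    have hs := Fin.rev_rev y
    unfold orientFactor skewFactor
    grind
  exact ⟨funext fun x => funext fun y => key x y, key⟩
end
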